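/- arXiv:1302.2881 — 6 statements merged into one kernel-verified Lean document; each statement's English description precedes it below -/
import Mathlib

section
/- Let A be an additive abelian group such that for every integer n > 1 there exists a nonzero a ∈ A with n·a = 0 (this holds for the group of points of a positive-dimensional complex abelian variety, e.g. an elliptic curve). Let h be a positive integer, let m_1, …, m_ℓ be integers, and set r = gcd(h, m_1, …, m_ℓ). Then the weighted (m_1, …, m_ℓ)-action of the h-torsion subgroup A[h] on A^ℓ is free if and only if r = 1. -/
/-!
A vector `x` is fixed by `a` exactly when every `m i` kills `a`, so the action is free iff no
nonzero `a` is killed by `h` and all the `m i`. An element is killed by these integers iff its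
additive order divides all of them, i.e. divides their gcd `r`. So `r = 1` forces `a = 0`, while
for `r > 1` (`r ≠ 0` because `h > 0`) any nonzero `r`-torsion element violates freeness.
-/

/-- Let `A` be an additive abelian group such that for every integer `n > 1`
there is a nonzero `n`-torsion element (as holds for the points of a positive-dimensional
complex abelian variety, e.g. an elliptic curve).  Let `h` be a positive integer, `m₁, …, m_ℓ`
integers and `r = gcd(h, m₁, …, m_ℓ)`.  The weighted `(m₁, …, m_ℓ)`-action of the `h`-torsion
subgroup `A[h]` on `A^ℓ`, given by `a' • (a₁, …, a_ℓ) = (a₁ + m₁ a', …, a_ℓ + m_ℓ a')`, is free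
if and only if `r = 1`. -/
theorem weighted_torsion_action_free_iff_gcd_eq_one
    {A : Type*} [AddCommGroup A]
    (htor : ∀ n : ℕ, 1 < n → ∃ a : A, a ≠ 0 ∧ n • a = 0)
    (h : ℕ) (hh : 0 < h) (ℓ : ℕ) (m : Fin ℓ → ℤ) :
    (∀ a : A, h • a = 0 →
        (∃ x : Fin ℓ → A, ∀ i, x i + m i • a = x i) → a = 0) ↔
      Nat.gcd h (Finset.univ.gcd fun i => (m i).natAbs) = 1 := by
  constructor
  · intro hfree
    set r := Nat.gcd h (Finset.univ.gcd fun i => (m i).natAbs) with hr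
    have hr0 : 0 < r := Nat.gcd_pos_of_pos_left _ hh
    by_contra hr1
    obtain ⟨a, ha0, ha⟩ := htor r (by omega)
    have hord : addOrderOf a ∣ r := addOrderOf_dvd_of_nsmul_eq_zero ha
    refine ha0 (hfree a ?_ ⟨0, fun i => ?_⟩)
    · exact addOrderOf_dvd_iff_nsmul_eq_zero.mp (hord.trans (Nat.gcd_dvd_left _ _))
    · have hi : r ∣ (m i).natAbs :=
        (Nat.gcd_dvd_right _ _).trans (Finset.gcd_dvd (Finset.mem_univ i))
      have hma : m i • a = 0 :=
        addOrderOf_dvd_iff_zsmul_eq_zero.mp (Int.natCast_dvd.mpr (hord.trans hi))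
      simp [hma]
  · rintro hr a ha ⟨x, hx⟩
    have hord : addOrderOf a ∣ Nat.gcd h (Finset.univ.gcd fun i => (m i).natAbs) := by
      refine Nat.dvd_gcd (addOrderOf_dvd_of_nsmul_eq_zero ha) (Finset.dvd_gcd fun i _ => ?_)
      exact Int.natCast_dvd.mp
        (addOrderOf_dvd_iff_zsmul_eq_zero.mpr (add_eq_left.mp (hx i)))
    rw [hr, Nat.dvd_one] at hord
    exact AddMonoid.addOrderOf_eq_one_iff.mp hord
end

section
/- Let A be a divisible additive abelian group, let h be a positive integer and let m_1, …, m_ℓ be integers. Then the quotient of A^ℓ by the image of the homomorphism A[h] → A^ℓ, a ↦ (m_1·a, …, m_ℓ·a) (i.e. the quotient of A^ℓ by the weighted (m_1, …, m_ℓ)-action of A[h]) is isomorphic, as an abelian group, to A^ℓ. -/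
/-!
Write `m = d • v`, where `d` generates the ideal spanned by the `m i`. If `d = 0` the subgroup is
trivial. Otherwise `v` is unimodular: `∑ u i * v i = 1` for some integers `u i`. Divisibility gives
`d • A[h] = A[k]` with `k = h / gcd(d, h)`, so the subgroup is `{a • v : k • a = 0}`. This is
exactly the kernel of the endomorphism `x ↦ x + (k - 1) • (u · x) • v` of `A^ℓ`, which multiplies
by `k` along `v` and is the identity on the complement `u · x = 0`. It is surjective because `A` is
divisible, and the first isomorphism theorem concludes.
-/

/-- An integer vector is a multiple `d • v` of a unimodular vector, unless it vanishes. -/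
lemma eq_zero_or_exists_smul_unimodular {ℓ : ℕ} (m : Fin ℓ → ℤ) :
    (∀ i, m i = 0) ∨ ∃ (d : ℤ) (u v : Fin ℓ → ℤ), (∀ i, m i = d * v i) ∧ ∑ i, u i * v i = 1 := by
  obtain ⟨d, hd⟩ := (IsPrincipalIdealRing.principal (Ideal.span (Set.range m))).principal
  have hdvd : ∀ i, d ∣ m i := fun i => by
    have : m i ∈ Ideal.span (Set.range m) := Ideal.subset_span ⟨i, rfl⟩
    rw [hd] at this
    exact Ideal.mem_span_singleton.1 this
  choose v hv using hdvd
  by_cases h0 : d = 0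
  · left
    intro i
    rw [hv i, h0, zero_mul]
  · right
    have hmem : d ∈ Ideal.span (Set.range m) := by
      rw [hd]
      exact Ideal.mem_span_singleton_self d
    obtain ⟨u, hu⟩ := Ideal.mem_span_range_iff_exists_fun.1 hmem
    refine ⟨d, u, v, hv, mul_left_cancel₀ h0 ?_⟩
    rw [mul_one, Finset.mul_sum]
    refine Eq.trans (Finset.sum_congr rfl fun i _ => ?_) hu
    rw [hv i]
    ring

/-- In a divisible group, `d • A[h] = A[k]` where `k = h / gcd(d, h)`. -/
lemma exists_smul_torsion_eq_torsion {A : Type*} [AddCommGroup A]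
    (hdiv : ∀ n : ℕ, 0 < n → Function.Surjective (fun a : A => n • a))
    (h : ℕ) (hh : 0 < h) (d : ℤ) :
    ∃ k : ℕ, 0 < k ∧ ∀ c : A, (k : ℤ) • c = 0 ↔ ∃ a : A, h • a = 0 ∧ c = d • a := by
  have hg : 0 < Int.gcd d h := Int.gcd_pos_of_ne_zero_right d (by exact_mod_cast hh.ne')
  obtain ⟨e, k, hcop, he, hk⟩ := Int.exists_gcd_one hg
  set g : ℕ := Int.gcd d h
  have hkpos : 0 < k := by
    have h1 : (0 : ℤ) < k * g := by rw [← hk]; exact_mod_cast hh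
    exact pos_of_mul_pos_left h1 (by positivity)
  lift k to ℕ using hkpos.le
  refine ⟨k, by exact_mod_cast hkpos, fun c => ⟨fun hc => ?_, ?_⟩⟩
  · obtain ⟨b, hb⟩ := hdiv g hg c
    have hb' : (g : ℤ) • b = c := by rw [natCast_zsmul]; exact hb
    obtain ⟨p, q, hpq⟩ := Int.isCoprime_iff_gcd_eq_one.2 hcop
    have hhb : (h : ℤ) • b = 0 := by rw [hk, mul_smul, hb', hc]
    -- `d • b = e • c`, and `p` inverts `e` modulo `k`, which kills `c`.
    refine ⟨p • b, ?_, ?_⟩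
    · rw [← natCast_zsmul, smul_comm, hhb, smul_zero]
    · calc c = (p * e + q * k) • c := by rw [hpq, one_smul]
        _ = (p * e) • c := by rw [add_smul, mul_smul q, hc, smul_zero, add_zero]
        _ = d • p • b := by rw [← hb', he, smul_smul, smul_smul]; congr 1; ring
  · rintro ⟨a, ha, rfl⟩
    have ha' : (h : ℤ) • a = 0 := by rw [natCast_zsmul, ha]
    rw [smul_smul, show (k : ℤ) * d = e * h by rw [he, hk]; ring, mul_smul, ha', smul_zero]

/-- For `u · v = 1` and `k > 0`, the subgroup `{c • v : k • c = 0}` is the kernel of a surjective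
endomorphism of `A^ℓ`. -/
lemma exists_surjective_endomorphism {A : Type*} [AddCommGroup A]
    (hdiv : ∀ n : ℕ, 0 < n → Function.Surjective (fun a : A => n • a))
    {ℓ : ℕ} (u v : Fin ℓ → ℤ) (huv : ∑ i, u i * v i = 1) (k : ℕ) (hk : 0 < k) :
    ∃ T : (Fin ℓ → A) →+ (Fin ℓ → A), Function.Surjective T ∧
      ∀ x, T x = 0 ↔ ∃ c : A, (k : ℤ) • c = 0 ∧ x = fun i => v i • c := by
  let U : (Fin ℓ → A) →+ A :=
    { toFun := fun x => ∑ i, u i • x i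
      map_zero' := by simp
      map_add' := fun x y => by simp [Finset.sum_add_distrib] }
  have hUv : ∀ c : A, U (fun i => v i • c) = c := fun c => by
    change ∑ i, u i • v i • c = c
    simp_rw [smul_smul]
    rw [← Finset.sum_smul, huv, one_smul]
  let V : A →+ (Fin ℓ → A) :=
    { toFun := fun c i => v i • c
      map_zero' := by ext; simp
      map_add' := fun x y => by ext; simp }
  have hUV : ∀ c : A, U (V c) = c := hUv
  let T : (Fin ℓ → A) →+ (Fin ℓ → A) :=
    { toFun := fun x => x + ((k : ℤ) - 1) • V (U x)
      map_zero' := by simp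
      map_add' := fun x y => by simp only [map_add, smul_add]; abel }
  have hT : ∀ x, T x = x + ((k : ℤ) - 1) • V (U x) := fun _ => rfl
  refine ⟨T, fun y => ?_, fun x => ⟨fun hx => ?_, ?_⟩⟩
  -- A preimage `x` of `y` must satisfy `k • U x = U y`, so `U x` is a `k`-th part `a` of `U y`.
  · obtain ⟨a, ha⟩ := hdiv k hk (U y)
    have ha' : (k : ℤ) • a = U y := by rw [natCast_zsmul]; exact ha
    refine ⟨y - ((k : ℤ) - 1) • V a, ?_⟩
    have hU : U (y - ((k : ℤ) - 1) • V a) = a := by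
      rw [map_sub, map_zsmul, hUV, ← ha', ← sub_smul, sub_sub_cancel, one_smul]
    rw [hT, hU, sub_add_cancel]
  -- Applying `U` to `T x = 0` gives `k • U x = 0`, after which `T x = 0` reads `x = V (U x)`.
  · rw [hT] at hx
    have hkU : (k : ℤ) • U x = 0 := by
      have := congrArg U hx
      rw [map_add, map_zsmul, hUV, map_zero, sub_smul, one_smul, add_sub_cancel] at this
      exact this
    refine ⟨U x, hkU, ?_⟩
    change x = V (U x)
    rw [sub_smul, one_smul, ← map_zsmul, hkU, map_zero, zero_sub, ← sub_eq_add_neg] at hx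
    exact sub_eq_zero.1 hx
  · rintro ⟨c, hc, rfl⟩
    change T (V c) = 0
    rw [hT, hUV, sub_smul, one_smul, add_sub_cancel, ← map_zsmul, hc, map_zero]

/-- Let `A` be a divisible additive abelian group, `h` a positive integer and
`m₁, …, m_ℓ` integers.  The quotient of `A^ℓ` by the image of the homomorphism
`A[h] → A^ℓ`, `a ↦ (m₁ a, …, m_ℓ a)` (i.e. by the weighted `(m₁, …, m_ℓ)`-action of the
`h`-torsion subgroup `A[h]`) is isomorphic, as an abelian group, to `A^ℓ`. -/
theorem quotient_by_weighted_torsion_action_iso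
    {A : Type*} [AddCommGroup A]
    (hdiv : ∀ n : ℕ, 0 < n → Function.Surjective (fun a : A => n • a))
    (h : ℕ) (hh : 0 < h) (ℓ : ℕ) (m : Fin ℓ → ℤ)
    (S : AddSubgroup (Fin ℓ → A))
    (hS : ∀ x : Fin ℓ → A, x ∈ S ↔ ∃ a : A, h • a = 0 ∧ x = fun i => m i • a) :
    Nonempty (((Fin ℓ → A) ⧸ S) ≃+ (Fin ℓ → A)) := by
  suffices H : ∃ T : (Fin ℓ → A) →+ (Fin ℓ → A), Function.Surjective T ∧ ∀ x, T x = 0 ↔ x ∈ S by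
    obtain ⟨T, hT, hker⟩ := H
    obtain rfl : T.ker = S := by
      ext x
      rw [AddMonoidHom.mem_ker, hker]
    exact ⟨QuotientAddGroup.quotientKerEquivOfSurjective T hT⟩
  rcases eq_zero_or_exists_smul_unimodular m with hm | ⟨d, u, v, hm, huv⟩
  · refine ⟨AddMonoidHom.id _, Function.surjective_id, fun x => ?_⟩
    rw [hS, AddMonoidHom.id_apply]
    constructor
    · rintro rfl
      exact ⟨0, smul_zero _, by ext; simp⟩
    · rintro ⟨a, -, rfl⟩
      ext i
      simp [hm]
  · obtain ⟨k, hk, hkt⟩ := exists_smul_torsion_eq_torsion hdiv h hh d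
    obtain ⟨T, hT, hker⟩ := exists_surjective_endomorphism hdiv u v huv k hk
    refine ⟨T, hT, fun x => ?_⟩
    have hsmul : ∀ a : A, (fun i => v i • d • a) = fun i => m i • a := fun a => by
      ext i
      rw [hm, smul_smul, mul_comm]
    rw [hker, hS]
    constructor
    · rintro ⟨c, hc, rfl⟩
      obtain ⟨a, ha, rfl⟩ := (hkt c).1 hc
      exact ⟨a, ha, hsmul a⟩
    · rintro ⟨a, ha, rfl⟩
      exact ⟨d • a, (hkt _).2 ⟨a, ha, rfl⟩, (hsmul a).symm⟩
end

section
/- Let A be an additive abelian group, h a positive integer, and m_1, …, m_ℓ integers with gcd(m_1, h) = 1; choose integers p, q with p·m_1 + q·h = 1. Then (i) the subgroup {(m_1·a, m_2·a, …, m_ℓ·a) : a ∈ A[h]} of A^ℓ equals the subgroup {(b, p·m_2·b, …, p·m_ℓ·b) : b ∈ A[h]}; and (ii) the homomorphism A^ℓ → (A/A[h]) × A^{ℓ−1} sending (a_1, …, a_ℓ) to ([a_1], a_2 − p·m_2·a_1, …, a_ℓ − p·m_ℓ·a_1) is surjective with kernel exactly this subgroup, so the quotient of A^ℓ by the weighted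 (m_1, …, m_ℓ)-action of A[h] is isomorphic as an abelian group to (A/A[h]) × A^{ℓ−1}. -/
/-!
Since `p * m 0 + q * h = 1`, multiplication by `m 0` is a bijection of `A[h]` with inverse
multiplication by `p` (`bezout_zsmul_torsion`). Substituting `b = m 0 • a`, `a = p • b` turns
the parametrization of the orbit subgroup by `a` into the one by `b`, in which the first
coordinate is free in `A[h]` and determines the others. Membership in this form is exactly
vanishing of `f`. A preimage under `f` of `([a], y)` is `(a, y i + (p * m i) • a)`, so `f` is
surjective, and the first isomorphism theorem gives the quotient.
-/

/-- Multiplication by `p * n` is the identity on the `h`-torsion when `p * n ≡ 1` modulo `h`. -/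
theorem bezout_zsmul_torsion {A : Type*} [AddCommGroup A] {h : ℕ} {p q n : ℤ}
    (hpq : p * n + q * (h : ℤ) = 1) {a : A} (ha : h • a = 0) : (p * n) • a = a := by
  have key : (p * n + q * (h : ℤ)) • a = a := by rw [hpq, one_zsmul]
  rwa [add_zsmul, mul_zsmul a q, natCast_zsmul, ha, zsmul_zero, add_zero] at key


/-- Let `A` be an additive abelian group, `h` a positive integer and
`m₁, …, m_ℓ` integers (here indexed by `Fin (ℓ+1)`, the first weight being `m 0`) with
`gcd(m₁, h) = 1`; choose integers `p, q` with `p·m₁ + q·h = 1`.  Then: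
(i) the subgroup `{(m₁ a, m₂ a, …, m_ℓ a) : a ∈ A[h]}` of `A^ℓ` equals the subgroup
`{(b, p m₂ b, …, p m_ℓ b) : b ∈ A[h]}`;
(ii) the homomorphism `A^ℓ → (A/A[h]) × A^{ℓ-1}`,
`(a₁, …, a_ℓ) ↦ ([a₁], a₂ − p m₂ a₁, …, a_ℓ − p m_ℓ a₁)`, is surjective with kernel exactly
this subgroup, so the quotient of `A^ℓ` by the weighted `(m₁, …, m_ℓ)`-action of `A[h]` is
isomorphic as an abelian group to `(A/A[h]) × A^{ℓ-1}`. -/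
theorem weighted_quotient_coprime_first_weight
    {A : Type*} [AddCommGroup A] (h : ℕ) (hh : 0 < h)
    (ℓ : ℕ) (m : Fin (ℓ + 1) → ℤ)
    (hgcd : Int.gcd (m 0) (h : ℤ) = 1)
    (p q : ℤ) (hpq : p * m 0 + q * (h : ℤ) = 1)
    (T : AddSubgroup A) (hT : ∀ a : A, a ∈ T ↔ h • a = 0)
    (S : AddSubgroup (Fin (ℓ + 1) → A))
    (hS : ∀ x : Fin (ℓ + 1) → A,
      x ∈ S ↔ ∃ a : A, h • a = 0 ∧ x = fun i => m i • a)
    (f : (Fin (ℓ + 1) → A) →+ (A ⧸ T) × (Fin ℓ → A))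
    (hf : ∀ x : Fin (ℓ + 1) → A,
      f x = (QuotientAddGroup.mk (x 0),
             fun i : Fin ℓ => x i.succ - (p * m i.succ) • x 0)) :
    (∀ x : Fin (ℓ + 1) → A,
        x ∈ S ↔ ∃ b : A, h • b = 0 ∧ x 0 = b ∧
          ∀ i : Fin ℓ, x i.succ = (p * m i.succ) • b) ∧
    Function.Surjective f ∧
    (∀ x : Fin (ℓ + 1) → A, f x = 0 ↔ x ∈ S) ∧
    Nonempty (((Fin (ℓ + 1) → A) ⧸ S) ≃+ (A ⧸ T) × (Fin ℓ → A)) := by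
  have torsion (n : ℤ) {a : A} (ha : h • a = 0) : h • n • a = 0 := by
    rw [smul_comm, ha, smul_zero]
  have hS' : ∀ x : Fin (ℓ + 1) → A,
      x ∈ S ↔ ∃ b : A, h • b = 0 ∧ x 0 = b ∧
        ∀ i : Fin ℓ, x i.succ = (p * m i.succ) • b := by
    intro x
    rw [hS]
    constructor
    · rintro ⟨a, ha, rfl⟩
      refine ⟨m 0 • a, torsion _ ha, rfl, fun i => ?_⟩
      calc m i.succ • a = m i.succ • (p * m 0) • a := by rw [bezout_zsmul_torsion hpq ha]
        _ = (p * m i.succ) • m 0 • a := by simp only [smul_smul]; congr 1; ring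
    · rintro ⟨b, hb, h0, hi⟩
      refine ⟨p • b, torsion _ hb, funext fun i => ?_⟩
      rw [smul_smul, mul_comm]
      refine Fin.cases ?_ (fun j => hi j) i
      rw [h0, bezout_zsmul_torsion hpq hb]
  have hsurj : Function.Surjective f := by
    rintro ⟨t, y⟩
    obtain ⟨a, rfl⟩ := QuotientAddGroup.mk_surjective t
    refine ⟨Fin.cons a fun i => y i + (p * m i.succ) • a, ?_⟩
    simp [hf]
  have hker : ∀ x : Fin (ℓ + 1) → A, f x = 0 ↔ x ∈ S := by
    intro x
    rw [hf, hS', Prod.mk_eq_zero, QuotientAddGroup.eq_zero_iff, hT, funext_iff]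
    simp only [Pi.zero_apply, sub_eq_zero]
    constructor
    · rintro ⟨h0, hi⟩
      exact ⟨x 0, h0, rfl, hi⟩
    · rintro ⟨b, hb, rfl, hi⟩
      exact ⟨hb, hi⟩
  have hSker : S = f.ker := by
    ext x
    rw [AddMonoidHom.mem_ker, hker]
  exact ⟨hS', hsurj, hker, ⟨(QuotientAddGroup.quotientAddEquivOfEq hSker).trans
    (QuotientAddGroup.quotientKerEquivOfSurjective f hsurj)⟩⟩
end

section
/- Let X be an additive abelian group, m a positive integer, and let Γ_m = (ℤ₂)^m ⋊ S_m act on (X × ℂ)^m (via the involution (x,t) ↦ (−x,−t) on each coordinate) and on ℂ^m (via t ↦ −t), and let π : ((X × ℂ)^m)/Γ_m → (ℂ^m)/Γ_m be the induced map of quotients. (a) If t_1, …, t_m ∈ ℂ satisfy t_i ≠ 0 for all i and t_i ≠ ±t_j for i ≠ j, then the fibre of π over the Γ_m-orbit of (t_1, …, t_m) is in bijection with X^m. (b) If t̄ = (0, …, 0, t_1, …, t_1, …, t_ℓ, …, t_ℓ) has m_0 zero entries and each t_i repeated m_i times, with t_i ≠ 0 and t_i ≠ ±t_j for i ≠ j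 and m_0 + m_1 + ⋯ + m_ℓ = m, then the fibre of π over the Γ_m-orbit of t̄ is in bijection with Sym^{m_0}(X/±) × Sym^{m_1}(X) × ⋯ × Sym^{m_ℓ}(X), where X/± denotes the quotient of X by the involution x ↦ −x. -/
/-!
The idea is to replace `Γ_m`-orbits by multisets. For an involution `neg` on `Y`, the orbit of
`x ∈ Y^m` is determined by the multiset of the classes `[x_i] ∈ Y/±`, and every multiset of size
`m` in `Y/±` occurs (`signPermRel_mk_eq_iff`, `exists_classMultiset_eq`). Under this dictionary `π`
becomes the pushforward of multisets along `f : (X × ℂ)/± → ℂ/±`, `[(x, t)] ↦ [t]`.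

A multiset whose pushforward is `∑ n_i • b_i`, with the `b_i` distinct, is a sum of multisets of
size `n_i` in the fibres `f⁻¹(b_i)`, in a unique way (`nonempty_fibreSum_equiv`). The fibre of `f` over
`[0]` is `X/±`, embedded by `[x] ↦ [(x, 0)]`, and the fibre over `[t]` with `t ≠ 0` is `X`,
embedded by `x ↦ [(x, t)]`, because the sign is fixed by the second coordinate. This gives (b).
Part (a) is the case where `m₀ = 0` and all `m_i = 1`, since `Sym¹ X = X`.
-/

/-- The orbit relation of the group `Γ_m = (ℤ₂)^m ⋊ S_m` acting on `Y^m`, where `S_m` permutes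
the coordinates and the `i`-th `ℤ₂` factor applies the involution `neg` to the `i`-th
coordinate. -/
def signPermRel {Y : Type*} (neg : Y → Y) (m : ℕ) :
    (Fin m → Y) → (Fin m → Y) → Prop :=
  fun x y => ∃ (σ : Equiv.Perm (Fin m)) (ε : Fin m → Bool),
    ∀ i, y i = if ε i then neg (x (σ i)) else x (σ i)

/-- The quotient `X/±` of `X` by the involution `x ↦ -x`. -/
def negQuot (X : Type*) [Neg X] : Type _ := Quot (fun a b : X => a = -b)

/-- The quotient of `Y` by the map `neg`, an involution in all uses. -/
abbrev InvQuot {Y : Type*} (neg : Y → Y) : Type _ := Quot (fun a b : Y => a = neg b)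

theorem invQuot_mk_eq_iff {Y : Type*} {neg : Y → Y} (h : Function.Involutive neg) (a b : Y) :
    (Quot.mk _ a : InvQuot neg) = Quot.mk _ b ↔ a = b ∨ a = neg b := by
  constructor
  · intro hab
    have := Quot.eqvGen_exact hab
    clear hab
    induction this with
    | rel x y hxy => exact Or.inr hxy
    | refl x => exact Or.inl rfl
    | symm x y _ ih =>
      rcases ih with rfl | rfl
      · exact Or.inl rfl
      · exact Or.inr (h y).symm
    | trans x y z _ _ ih₁ ih₂ =>
      rcases ih₁ with rfl | rfl <;> rcases ih₂ with rfl | rfl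
      · exact Or.inl rfl
      · exact Or.inr rfl
      · exact Or.inr rfl
      · exact Or.inl (h z)
  · rintro (rfl | hab)
    · rfl
    · exact Quot.sound hab

/-- The multiset of classes `[x_i] ∈ Y/±` of the entries of `x ∈ Y^m`. -/
def classMultiset {Y : Type*} (neg : Y → Y) {m : ℕ} (x : Fin m → Y) : Multiset (InvQuot neg) :=
  Multiset.map (fun i => (Quot.mk _ (x i) : InvQuot neg)) Finset.univ.val

/-- Two families have the same multiset of values iff they differ by a permutation of the index set:
equal multiplicities give bijections between corresponding level sets, which glue. -/
theorem map_univ_eq_map_univ_iff {ι A : Type*} [Fintype ι] (u v : ι → A) :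
    Multiset.map u Finset.univ.val = Multiset.map v Finset.univ.val ↔
      ∃ σ : Equiv.Perm ι, u = v ∘ σ := by
  classical
  constructor
  · intro h
    have hc : ∀ c, Fintype.card {i // u i = c} = Fintype.card {i // v i = c} := by
      intro c
      have := congrArg (Multiset.count c) h
      simp only [Multiset.count_map] at this
      rw [Fintype.card_subtype, Fintype.card_subtype, Finset.card_def, Finset.card_def,
        Finset.filter_val, Finset.filter_val]
      simpa only [eq_comm] using this
    let e := fun c => Fintype.equivOfCardEq (hc c)
    exact ⟨Equiv.ofFiberEquiv e, funext fun i => (Equiv.ofFiberEquiv_map e i).symm⟩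
  · rintro ⟨σ, rfl⟩
    rw [← Multiset.map_map, Multiset.map_univ_val_equiv]

theorem signPermRel_iff_classMultiset {Y : Type*} {neg : Y → Y} (h : Function.Involutive neg)
    {m : ℕ} (x y : Fin m → Y) :
    signPermRel neg m x y ↔ classMultiset neg x = classMultiset neg y := by
  classical
  rw [eq_comm, classMultiset, classMultiset, map_univ_eq_map_univ_iff]
  constructor
  · rintro ⟨σ, ε, hy⟩
    refine ⟨σ, funext fun i => (invQuot_mk_eq_iff h _ _).2 ?_⟩
    rw [hy i]
    split <;> simp
  · rintro ⟨σ, hσ⟩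
    refine ⟨σ, fun i => decide (y i ≠ x (σ i)), fun i => ?_⟩
    have := (invQuot_mk_eq_iff h _ _).1 (congrFun hσ i)
    by_cases hi : y i = x (σ i)
    · simp [hi]
    · simpa [hi] using this

/-- Two points of `Y^m` lie in the same `Γ_m`-orbit iff their classes form the same multiset in
`Y/±`. -/
theorem signPermRel_mk_eq_iff {Y : Type*} {neg : Y → Y} (h : Function.Involutive neg)
    {m : ℕ} (x y : Fin m → Y) :
    (Quot.mk (signPermRel neg m) x) = Quot.mk _ y ↔
      classMultiset neg x = classMultiset neg y := by
  constructor
  · exact fun hxy => congrArg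
      (Quot.lift (classMultiset neg) fun a b hab => (signPermRel_iff_classMultiset h a b).1 hab) hxy
  · exact fun hxy => Quot.sound ((signPermRel_iff_classMultiset h x y).2 hxy)

theorem exists_classMultiset_eq {Y : Type*} (neg : Y → Y) {m : ℕ} (M : Multiset (InvQuot neg))
    (hM : M.card = m) : ∃ x : Fin m → Y, classMultiset neg x = M := by
  induction M using Quotient.inductionOn with
  | h l =>
    subst hM
    refine ⟨fun i => (l.get i).out, ?_⟩
    simp only [classMultiset, Quot.out_eq]
    exact congrArg Multiset.ofList (List.map_get_finRange l)

/-- Let `b_i` be distinct points of `B` and let `g_i : F_i → A` be injective with image the fibre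
of `f : A → B` over `b_i`. Then `(s_i) ↦ ∑ g_i(s_i)` is a bijection from `∏ Sym^{n_i} F_i` to the
multisets in `A` with pushforward `∑ n_i • b_i`; only the existence of a bijection is recorded. -/
theorem nonempty_fibreSum_equiv {ι A B : Type*} [Fintype ι] {F : ι → Type*} (f : A → B)
    (b : ι → B) (hb : Function.Injective b) (n : ι → ℕ) (g : ∀ i, F i → A)
    (hg : ∀ i, Function.Injective (g i)) (hgr : ∀ i a, f a = b i ↔ a ∈ Set.range (g i)) :
    Nonempty ((∀ i, Sym (F i) (n i)) ≃
      {M : Multiset A // M.map f = ∑ i, Multiset.replicate (n i) (b i)}) := by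
  classical
  have hfg : ∀ i x, f (g i x) = b i := fun i x => (hgr i _).2 ⟨x, rfl⟩
  let S : (∀ i, Sym (F i) (n i)) → Multiset A := fun s => ∑ i, (s i : Multiset (F i)).map (g i)
  have hmapsum : ∀ G : ι → Multiset A, (∑ i, G i).map f = ∑ i, (G i).map f := fun G =>
    map_sum (Multiset.mapAddMonoidHom f) G Finset.univ
  have hS : ∀ s, (S s).map f = ∑ i, Multiset.replicate (n i) (b i) := by
    intro s
    rw [hmapsum]
    refine Finset.sum_congr rfl fun i _ => ?_
    rw [Multiset.map_map, Multiset.eq_replicate]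
    refine ⟨by simp, fun y hy => ?_⟩
    obtain ⟨x, -, rfl⟩ := Multiset.mem_map.1 hy
    exact hfg i x
  -- the `i`-th summand is recovered as the part of the multiset lying over `b i`
  have hfilter : ∀ s i, (S s).filter (fun a => f a = b i) = (s i : Multiset (F i)).map (g i) := by
    intro s i
    have hsum : (S s).filter (fun a => f a = b i) =
        ∑ j, ((s j : Multiset (F j)).map (g j)).filter (fun a => f a = b i) := by
      ext a
      simp only [S, Multiset.count_filter, Multiset.count_sum']
      split <;> simp
    rw [hsum, Finset.sum_eq_single i]
    · rw [Multiset.filter_eq_self]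
      intro a ha
      obtain ⟨x, -, rfl⟩ := Multiset.mem_map.1 ha
      exact hfg i x
    · intro j _ hj
      rw [Multiset.filter_eq_nil]
      intro a ha hai
      obtain ⟨x, -, rfl⟩ := Multiset.mem_map.1 ha
      exact hj (hb ((hfg j x).symm.trans hai))
    · simp
  refine ⟨Equiv.ofBijective (fun s => ⟨S s, hS s⟩) ⟨fun s s' hss => ?_, ?_⟩⟩
  · have hss' : S s = S s' := congrArg Subtype.val hss
    funext i
    apply Sym.coe_injective
    apply Multiset.map_injective (hg i)
    rw [← hfilter, ← hfilter, hss']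
  · rintro ⟨M, hM⟩
    have hlift : ∀ i, ∃ s : Multiset (F i), s.map (g i) = M.filter (fun a => f a = b i) := by
      intro i
      have hmem : ∀ a ∈ M.filter (fun a => f a = b i), a ∈ Set.range (g i) := fun a ha =>
        (hgr i a).1 (Multiset.mem_filter.1 ha).2
      have hinv : ∀ a : {a // a ∈ M.filter (fun a => f a = b i)}, ∃ x, g i x = a.1 :=
        fun a => hmem a.1 a.2
      choose r hr using hinv
      refine ⟨(M.filter (fun a => f a = b i)).attach.map r, ?_⟩
      rw [Multiset.map_map]
      simp [hr]
    choose s hs using hlift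
    have hcard : ∀ i, (s i).card = n i := by
      intro i
      rw [← Multiset.card_map (g i), hs]
      have h1 : (M.filter (fun a => f a = b i)).card = (M.map f).count (b i) := by
        rw [Multiset.count_map]
        simp only [eq_comm]
      rw [h1, hM, Multiset.count_sum', Finset.sum_eq_single i]
      · simp
      · intro j _ hj
        rw [Multiset.count_replicate, if_neg fun h => hj (hb h)]
      · simp
    refine ⟨fun i => ⟨s i, hcard i⟩, Subtype.ext ?_⟩
    change ∑ i, (s i).map (g i) = M
    simp only [hs]
    ext a
    rw [Multiset.count_sum']
    simp only [Multiset.count_filter]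
    by_cases ha : a ∈ M
    · have : f a ∈ ∑ i, Multiset.replicate (n i) (b i) := hM ▸ Multiset.mem_map_of_mem f ha
      obtain ⟨i, -, hi⟩ := Multiset.mem_sum.1 this
      have hi' := Multiset.eq_of_mem_replicate hi
      rw [Finset.sum_eq_single i]
      · simp [hi']
      · intro j _ hj
        rw [if_neg fun h => hj (hb (h.symm.trans hi'))]
      · simp
    · simp [Multiset.count_eq_zero_of_notMem ha]

section Fibres

variable {X : Type*} [AddCommGroup X]

theorem pairNeg_involutive : Function.Involutive (fun p : X × ℂ => (-p.1, -p.2)) :=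
  fun p => by simp

theorem complexNeg_involutive : Function.Involutive (fun s : ℂ => -s) := fun s => neg_neg s

/-- The projection `(X × ℂ)/± → ℂ/±`. -/
def sndQuot : InvQuot (fun p : X × ℂ => (-p.1, -p.2)) → InvQuot (fun s : ℂ => -s) :=
  Quot.map Prod.snd fun _ _ h => congrArg Prod.snd h

/-- The fibre of `(X × ℂ)/± → ℂ/±` over the class of `0` (index `none`) is `X/±`, and over the
class of a nonzero number (index `some i`) it is `X`. -/
def FibreType (X : Type*) [AddCommGroup X] {ℓ : ℕ} : Option (Fin ℓ) → Type _
  | none => negQuot X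
  | some _ => X

/-- The inclusion of the fibres: `[x] ↦ [(x, 0)]` over `0`, and `x ↦ [(x, t_i)]` over `t_i`. -/
def fibreIncl {ℓ : ℕ} (t : Fin ℓ → ℂ) :
    ∀ o : Option (Fin ℓ), FibreType X o → InvQuot (fun p : X × ℂ => (-p.1, -p.2))
  | none => Quot.map (fun x : X => (x, (0 : ℂ))) fun a b (h : a = -b) => by simp [h]
  | some i => fun x : X => Quot.mk _ (x, t i)

theorem fibreIncl_injective {ℓ : ℕ} (t : Fin ℓ → ℂ) (ht : ∀ i, t i ≠ 0) (o : Option (Fin ℓ)) :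
    Function.Injective (fibreIncl (X := X) t o) := by
  cases o with
  | none =>
    rintro ⟨x⟩ ⟨y⟩ hxy
    rcases (invQuot_mk_eq_iff pairNeg_involutive _ _).1 hxy with h | h
    · exact congrArg (Quot.mk _) (congrArg Prod.fst h)
    · exact Quot.sound (congrArg Prod.fst h)
  | some i =>
    intro x y hxy
    rcases (invQuot_mk_eq_iff pairNeg_involutive _ _).1 hxy with h | h
    · exact congrArg Prod.fst h
    · exact absurd (self_eq_neg.1 (congrArg Prod.snd h)) (ht i)

/-- The image of `fibreIncl t o` is the fibre of `sndQuot` over the class of `0` or of `t_i`. -/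
theorem sndQuot_eq_iff {ℓ : ℕ} (t : Fin ℓ → ℂ) (o : Option (Fin ℓ))
    (a : InvQuot (fun p : X × ℂ => (-p.1, -p.2))) :
    sndQuot a = Quot.mk _ (o.elim 0 t) ↔ a ∈ Set.range (fibreIncl (X := X) t o) := by
  constructor
  · obtain ⟨x, s⟩ := a
    intro h
    have h' := (invQuot_mk_eq_iff complexNeg_involutive _ _).1 h
    cases o with
    | none =>
      have hs : s = 0 := by simpa using h'
      subst hs
      exact ⟨Quot.mk _ x, rfl⟩
    | some i =>
      rcases h' with hs | hs
      · have hs : s = t i := hs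
        subst hs
        exact ⟨x, rfl⟩
      · have hs : s = -t i := hs
        subst hs
        exact ⟨(-x : X), Quot.sound (by simp)⟩
  · rintro ⟨x, rfl⟩
    cases o with
    | none =>
      obtain ⟨x⟩ := x
      rfl
    | some i => rfl

/-- The classes of `0, t_1, …, t_ℓ` in `ℂ/±` are distinct. -/
theorem optionElim_mk_injective {ℓ : ℕ} (t : Fin ℓ → ℂ) (ht : ∀ i, t i ≠ 0)
    (htt : ∀ i j, i ≠ j → t i ≠ t j ∧ t i ≠ -t j) :
    Function.Injective
      (fun o : Option (Fin ℓ) => (Quot.mk _ (o.elim 0 t) : InvQuot (fun s : ℂ => -s))) := by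
  intro o o' h
  have h' := (invQuot_mk_eq_iff complexNeg_involutive _ _).1 h
  rcases o with _ | i <;> rcases o' with _ | j
  · rfl
  · simp [eq_comm, ht j] at h'
  · simp [ht i] at h'
  · by_contra hij
    have hij' : i ≠ j := fun e => hij (congrArg some e)
    rcases h' with h' | h'
    · exact (htt i j hij').1 h'
    · exact (htt i j hij').2 h'

/-- Part (b): the fibre over a point with prescribed multiplicities. -/
theorem fibre_equiv_prod_sym (m : ℕ)
    (π : Quot (signPermRel (fun p : X × ℂ => (-p.1, -p.2)) m) →
         Quot (signPermRel (fun s : ℂ => -s) m))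
    (hπ : ∀ x : Fin m → X × ℂ, π (Quot.mk _ x) = Quot.mk _ (fun i => (x i).2))
    (ℓ m₀ : ℕ) (mm : Fin ℓ → ℕ) (t : Fin ℓ → ℂ) (ht : ∀ i, t i ≠ 0)
    (htt : ∀ i j, i ≠ j → t i ≠ t j ∧ t i ≠ -t j) (tb : Fin m → ℂ)
    (htb : Multiset.map tb Finset.univ.val =
      Multiset.replicate m₀ 0 + ∑ i, Multiset.replicate (mm i) (t i)) :
    Nonempty ({z : Quot (signPermRel (fun p : X × ℂ => (-p.1, -p.2)) m) //
        π z = Quot.mk _ tb} ≃ (Sym (negQuot X) m₀ × ∀ i, Sym X (mm i))) := by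
  let n : Option (Fin ℓ) → ℕ := fun o => o.elim m₀ mm
  let b : Option (Fin ℓ) → InvQuot (fun s : ℂ => -s) := fun o => Quot.mk _ (o.elim 0 t)
  have htb' : classMultiset (fun s : ℂ => -s) tb = ∑ o, Multiset.replicate (n o) (b o) := by
    have := congrArg (Multiset.mapAddMonoidHom
      (fun s : ℂ => (Quot.mk _ s : InvQuot (fun s : ℂ => -s)))) htb
    rw [map_add, map_sum] at this
    simpa [classMultiset, Fintype.sum_option, n, b, Multiset.map_replicate,
      Function.comp_def] using this
  have hclass : ∀ x : Fin m → X × ℂ, π (Quot.mk _ x) = Quot.mk _ tb ↔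
      (classMultiset (fun p : X × ℂ => (-p.1, -p.2)) x).map sndQuot =
        ∑ o, Multiset.replicate (n o) (b o) := by
    intro x
    rw [hπ, signPermRel_mk_eq_iff complexNeg_involutive, htb', classMultiset, classMultiset,
      Multiset.map_map]
    rfl
  obtain ⟨e⟩ := nonempty_fibreSum_equiv sndQuot b (optionElim_mk_injective t ht htt) n
    (fibreIncl (X := X) t) (fibreIncl_injective t ht) (sndQuot_eq_iff t)
  let Q : Quot (signPermRel (fun p : X × ℂ => (-p.1, -p.2)) m) →
      Multiset (InvQuot (fun p : X × ℂ => (-p.1, -p.2))) :=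
    Quot.lift (classMultiset _) fun a c hac =>
      (signPermRel_iff_classMultiset pairNeg_involutive a c).1 hac
  have hQ : ∀ z, π z = Quot.mk _ tb ↔
      (Q z).map sndQuot = ∑ o, Multiset.replicate (n o) (b o) := by
    rintro ⟨x⟩
    exact hclass x
  let e₁ : {z : Quot (signPermRel (fun p : X × ℂ => (-p.1, -p.2)) m) // π z = Quot.mk _ tb} ≃
      {M : Multiset (InvQuot (fun p : X × ℂ => (-p.1, -p.2))) //
        M.map sndQuot = ∑ o, Multiset.replicate (n o) (b o)} := by
    refine Equiv.ofBijective (fun z => ⟨Q z.1, (hQ z.1).1 z.2⟩) ⟨?_, ?_⟩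
    · rintro ⟨⟨x⟩, hx⟩ ⟨⟨y⟩, hy⟩ hxy
      exact Subtype.ext
        ((signPermRel_mk_eq_iff pairNeg_involutive x y).2 (congrArg Subtype.val hxy))
    · rintro ⟨M, hM⟩
      -- the pushforward has the size of `classMultiset tb`, so `M` has size `m`
      have hcard : M.card = m := by
        rw [← Multiset.card_map sndQuot M, hM, ← htb']
        simp [classMultiset]
      obtain ⟨x, hx⟩ := exists_classMultiset_eq _ M hcard
      exact ⟨⟨Quot.mk _ x, (hclass x).2 (hx ▸ hM)⟩, Subtype.ext hx⟩
  let e₂ : (∀ o, Sym (FibreType X o) (n o)) ≃ (Sym (negQuot X) m₀ × ∀ i, Sym X (mm i)) :=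
    Equiv.piOptionEquivProd (β := fun o : Option (Fin ℓ) => Sym (FibreType X o) (n o))
  exact ⟨e₁.trans (e.symm.trans e₂)⟩

end Fibres

/-- Let `X` be an additive abelian group, `m` a positive integer, and let
`Γ_m = (ℤ₂)^m ⋊ S_m` act on `(X × ℂ)^m` (via `(x,t) ↦ (-x,-t)` coordinatewise) and on `ℂ^m`
(via `t ↦ -t`), with `π : ((X × ℂ)^m)/Γ_m → (ℂ^m)/Γ_m` the induced map of quotients.
(a) If `t₁, …, t_m ∈ ℂ` satisfy `t_i ≠ 0` and `t_i ≠ ±t_j` for `i ≠ j`, the fibre of `π` over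
the `Γ_m`-orbit of `(t₁, …, t_m)` is in bijection with `X^m`.
(b) If `t̄ ∈ ℂ^m` has `m₀` zero entries and each `t_i` (with `t_i ≠ 0`, `t_i ≠ ±t_j` for
`i ≠ j`) repeated `m_i` times, `m₀ + m₁ + ⋯ + m_ℓ = m`, then the fibre of `π` over the
`Γ_m`-orbit of `t̄` is in bijection with `Sym^{m₀}(X/±) × Sym^{m₁} X × ⋯ × Sym^{m_ℓ} X`. -/
theorem hitchin_fibres_sign_perm_quotient
    {X : Type*} [AddCommGroup X] (m : ℕ) (hm : 0 < m)
    (π : Quot (signPermRel (fun p : X × ℂ => (-p.1, -p.2)) m) →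
         Quot (signPermRel (fun s : ℂ => -s) m))
    (hπ : ∀ x : Fin m → X × ℂ,
      π (Quot.mk _ x) = Quot.mk _ (fun i => (x i).2)) :
    (∀ t : Fin m → ℂ, (∀ i, t i ≠ 0) →
      (∀ i j, i ≠ j → t i ≠ t j ∧ t i ≠ -t j) →
      Nonempty ({z : Quot (signPermRel (fun p : X × ℂ => (-p.1, -p.2)) m) //
          π z = Quot.mk _ t} ≃ (Fin m → X))) ∧
    (∀ (ℓ m₀ : ℕ) (mm : Fin ℓ → ℕ) (t : Fin ℓ → ℂ),
      (∀ i, t i ≠ 0) → (∀ i j, i ≠ j → t i ≠ t j ∧ t i ≠ -t j) →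
      (∀ i, 0 < mm i) → m₀ + ∑ i, mm i = m →
      ∀ tb : Fin m → ℂ,
        Multiset.map tb Finset.univ.val =
          Multiset.replicate m₀ 0 + ∑ i, Multiset.replicate (mm i) (t i) →
        Nonempty ({z : Quot (signPermRel (fun p : X × ℂ => (-p.1, -p.2)) m) //
            π z = Quot.mk _ tb} ≃
          (Sym (negQuot X) m₀ × ∀ i, Sym X (mm i)))) := by
  have hb := fibre_equiv_prod_sym m π hπ
  refine ⟨fun t ht htt => ?_, fun ℓ m₀ mm t ht htt _ _ tb htb => hb ℓ m₀ mm t ht htt tb htb⟩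
  obtain ⟨e⟩ := hb m 0 (fun _ => 1) t ht htt t (by
    simp only [Multiset.replicate_zero, zero_add, Multiset.replicate_one]
    exact (Multiset.sum_map_singleton (Multiset.map t Finset.univ.val)).symm.trans
      (by rw [Multiset.map_map]; rfl))
  exact ⟨e.trans ((Equiv.uniqueProd _ _).trans
    (Equiv.piCongrRight fun _ => Sym.oneEquiv.symm))⟩
end

section
/- Let X be an additive abelian group and m a positive integer. Let Δ_m be the subgroup of Γ_m = (ℤ₂)^m ⋊ S_m consisting of elements whose sign-change vector has an even number of nontrivial entries, acting on (X × ℂ)^m (via (x,t) ↦ (−x,−t) coordinate-wise) and on ℂ^m (via t ↦ −t), and let π̄_m : ((X × ℂ)^m)/Δ_m → (ℂ^m)/Δ_m be the induced map. (a) If t_1, …, t_m ∈ ℂ satisfy t_i ≠ 0 and t_i ≠ ±t_j for i ≠ j, the fibre of π̄_m over the Δ_m-orbit of (t_1, …, t_m) is in bijection with X^m. (b) If t̄ = (−t_1, t_1, …, t_1, t_2, …, t_2, …, t_ℓ, …, t_ℓ) where t_1 appears with one sign flipped and multiplicities m_1, …, m_ℓ (all m_i even, m_1 + ⋯ + m_ℓ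 = m) and t_i ≠ 0, t_i ≠ ±t_j for i ≠ j, then the fibre over its Δ_m-orbit is in bijection with Sym^{m_1}(X) × ⋯ × Sym^{m_ℓ}(X). (c) If t̄ = (0, …, 0, t_1, …, t_1, …, t_ℓ, …, t_ℓ) has m_0 zeros and each t_i ≠ 0 repeated m_i times with t_i ≠ ±t_j for i ≠ j, then the fibre over its Δ_m-orbit is in bijection with (X^{m_0}/Δ_{m_0}) × Sym^{m_1}(X) × ⋯ × Sym^{m_ℓ}(X), where Δ_{m_0} acts on X^{m_0} by permutations and even numbers of negations. -/
/-!
The fibre of `π̄_m` over the orbit of `t̄` is the quotient of `X^m` by the stabiliser of `t̄` in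
`Δ_m`: every class in the fibre has a representative lying exactly over `t̄`, and two such
representatives are equivalent precisely when an element of the stabiliser carries one to the
other.

For `t̄` as in (c), the coordinates are indexed by `Fin m₀ ⊕ Σ k, Fin (mm k)`. Since `t_k ≠ 0` and
`t_k ≠ ±t_j`, an element of `Δ_m` fixing `t̄` preserves each block and changes signs in the zero
block only, so the stabiliser is `Δ_{m₀} × ∏ S_{m_k}`. Concretely, the map `X^m → fibre` and the
map `X^m → (X^{m₀}/Δ_{m₀}) × ∏ Sym^{m_k} X` are both surjective and they identify the same pairs
of points (`block_rel_iff`); this gives `nonempty_fibre_equiv`.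

Part (a) is the case `m₀ = 0` with all multiplicities `1`. For (b), changing the sign of a single
coordinate is an element of `Γ_m` that normalises `Δ_m`, so it acts compatibly on both quotients and
identifies the fibre over `(-t₁, t₁, …)` with the fibre over `(t₁, t₁, …)`, which is the case
`m₀ = 0` of (c).
-/

/-- The orbit relation of the group `Δ_m ⊂ Γ_m = (ℤ₂)^m ⋊ S_m` acting on `Y^m`: the subgroup
of elements whose sign-change vector has an even number of nontrivial entries; `S_m` permutes
the coordinates and the `i`-th `ℤ₂` factor applies the involution `neg` to the `i`-th
coordinate. -/
def signPermRelEven {Y : Type*} (neg : Y → Y) (m : ℕ) :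
    (Fin m → Y) → (Fin m → Y) → Prop :=
  fun x y => ∃ (σ : Equiv.Perm (Fin m)) (ε : Fin m → Bool),
    Even (Finset.univ.filter fun i => ε i = true).card ∧
    ∀ i, y i = if ε i then neg (x (σ i)) else x (σ i)

/-- A sign vector has an even number of nontrivial entries iff the sum of its entries in `ℤ/2`
vanishes. -/
lemma even_signs_iff {n : ℕ} (ε : Fin n → Bool) :
    Even (Finset.univ.filter fun i => ε i = true).card ↔
      ∑ i, (if ε i = true then 1 else 0 : ZMod 2) = 0 := by
  rw [← ZMod.natCast_eq_zero_iff_even, Finset.card_filter]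
  push_cast
  rfl

lemma xor_indicator (a b : Bool) :
    (if (a ^^ b) = true then 1 else 0 : ZMod 2) =
      (if a = true then 1 else 0) + (if b = true then 1 else 0) := by
  revert a b; decide

lemma signPermRelEven_equivalence {Y : Type*} {neg : Y → Y} (hneg : Function.Involutive neg)
    (m : ℕ) : Equivalence (signPermRelEven neg m) where
  refl x := ⟨1, fun _ => false, by simp, by simp⟩
  symm := by
    rintro x y ⟨σ, ε, hε, h⟩
    refine ⟨σ.symm, fun i => ε (σ.symm i), ?_, fun i => ?_⟩
    · rw [even_signs_iff] at hε ⊢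
      rwa [Equiv.sum_comp σ.symm (fun i => (if ε i = true then 1 else 0 : ZMod 2))]
    · rw [h (σ.symm i)]
      cases hb : ε (σ.symm i) <;> simp [hb, hneg _]
  trans := by
    rintro x y z ⟨σ, ε, hε, h⟩ ⟨τ, δ, hδ, h'⟩
    refine ⟨τ.trans σ, fun i => δ i ^^ ε (τ i), ?_, fun i => ?_⟩
    · rw [even_signs_iff] at hε hδ ⊢
      simp only [xor_indicator, Finset.sum_add_distrib]
      rw [hδ, Equiv.sum_comp τ (fun i => (if ε i = true then 1 else 0 : ZMod 2)), hε, add_zero]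
    · rw [h' i, h (τ i)]
      cases ha : δ i <;> cases hb : ε (τ i) <;> simp [ha, hb, hneg _]

lemma quot_mk_eq_iff {Y : Type*} {neg : Y → Y} (hneg : Function.Involutive neg) {m : ℕ}
    (x y : Fin m → Y) :
    Quot.mk (signPermRelEven neg m) x = Quot.mk (signPermRelEven neg m) y ↔
      signPermRelEven neg m x y :=
  Quotient.eq (r := ⟨_, signPermRelEven_equivalence hneg m⟩)

/-- Two finite families with the same multiset of values differ by a bijection of the index
types. -/
lemma exists_equiv_of_map_univ_eq {α β γ : Type*} [Fintype α] [Fintype β] (f : α → γ) (g : β → γ)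
    (h : Multiset.map f Finset.univ.val = Multiset.map g Finset.univ.val) :
    ∃ e : α ≃ β, ∀ a, f a = g (e a) := by
  classical
  have key : ∀ c, Nonempty ({a // f a = c} ≃ {b // g b = c}) := by
    intro c
    refine Fintype.card_eq.mp ?_
    have := congrArg (Multiset.count c) h
    rw [Multiset.count_map, Multiset.count_map] at this
    rw [Fintype.card_subtype, Fintype.card_subtype]
    simpa [Finset.card_def, eq_comm] using this
  let E := fun c => (key c).some
  refine ⟨(Equiv.sigmaFiberEquiv f).symm.trans
    ((Equiv.sigmaCongrRight E).trans (Equiv.sigmaFiberEquiv g)), fun a => ?_⟩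
  exact ((E (f a) ⟨a, rfl⟩).2).symm

/-- The class in `Sym^n X` of a point of `X^n`. -/
def symOfFn {X : Type*} {n : ℕ} (f : Fin n → X) : Sym X n :=
  ⟨Multiset.map f Finset.univ.val, by simp⟩

lemma symOfFn_surjective {X : Type*} {n : ℕ} :
    Function.Surjective (symOfFn : (Fin n → X) → Sym X n) := by
  rintro ⟨s, hs⟩
  induction s using Quot.inductionOn with
  | h l =>
    have hl : l.length = n := hs
    subst hl
    refine ⟨l.get, Subtype.ext ?_⟩
    change Multiset.map l.get Finset.univ.val = (l : Multiset X)
    rw [Fin.univ_val_map, List.ofFn_get]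

lemma symOfFn_eq_iff {X : Type*} {n : ℕ} (f g : Fin n → X) :
    symOfFn f = symOfFn g ↔ ∃ σ : Equiv.Perm (Fin n), ∀ i, g i = f (σ i) := by
  constructor
  · intro h
    exact exists_equiv_of_map_univ_eq g f (congrArg Subtype.val h).symm
  · rintro ⟨σ, hσ⟩
    refine Subtype.ext ?_
    change Multiset.map f Finset.univ.val = Multiset.map g Finset.univ.val
    have : g = f ∘ σ := funext hσ
    rw [this, ← Multiset.map_map, Multiset.map_univ_val_equiv]

/-- The value of `t̄ = (0, …, 0, t_1, …, t_1, …, t_ℓ, …, t_ℓ)` at a coordinate, the coordinates being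
indexed by blocks. -/
def blockVal {ℓ m₀ : ℕ} (mm : Fin ℓ → ℕ) (t : Fin ℓ → ℂ) : Fin m₀ ⊕ (Σ k, Fin (mm k)) → ℂ :=
  Sum.elim (fun _ => 0) (fun p => t p.1)

/-- The stabiliser of `t̄` in `Δ_m` is `Δ_{m₀} × ∏ S_{m_k}`: two points of `(X × ℂ)^m` lying over
`t̄` are equivalent iff their zero blocks are equivalent under `Δ_{m₀}` and each of their other blocks
are equal up to permutation. -/
lemma block_rel_iff {X : Type*} [AddCommGroup X] {m ℓ m₀ : ℕ} (mm : Fin ℓ → ℕ) (t : Fin ℓ → ℂ)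
    (ht0 : ∀ i, t i ≠ 0) (ht : ∀ i j, i ≠ j → t i ≠ t j ∧ t i ≠ -t j)
    (e : Fin m ≃ Fin m₀ ⊕ (Σ k, Fin (mm k))) (x x' : Fin m → X) :
    signPermRelEven (fun p : X × ℂ => (-p.1, -p.2)) m
        (fun i => (x i, blockVal mm t (e i))) (fun i => (x' i, blockVal mm t (e i))) ↔
      signPermRelEven (fun x : X => -x) m₀
        (fun j => x (e.symm (Sum.inl j))) (fun j => x' (e.symm (Sum.inl j))) ∧
      ∀ k, ∃ σ : Equiv.Perm (Fin (mm k)),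
        ∀ j, x' (e.symm (Sum.inr ⟨k, j⟩)) = x (e.symm (Sum.inr ⟨k, σ j⟩)) := by
  have hself : ∀ i, t i ≠ -t i := fun i h => ht0 i (self_eq_neg.mp h)
  constructor
  · rintro ⟨σ, ε, hε, h⟩
    have h1 : ∀ p, x' (e.symm p) =
        if ε (e.symm p) then -x (σ (e.symm p)) else x (σ (e.symm p)) := by
      intro p
      have := congrArg Prod.fst (h (e.symm p))
      cases hp : ε (e.symm p) <;> simpa [hp] using this
    have h2 : ∀ p, blockVal mm t p = if ε (e.symm p) then -blockVal mm t (e (σ (e.symm p)))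
        else blockVal mm t (e (σ (e.symm p))) := by
      intro p
      have := congrArg Prod.snd (h (e.symm p))
      cases hp : ε (e.symm p) <;> simpa [hp] using this
    have hz : ∀ j : Fin m₀, ∃ j', e (σ (e.symm (Sum.inl j))) = Sum.inl j' := by
      intro j
      have := h2 (Sum.inl j)
      rcases hq : e (σ (e.symm (Sum.inl j))) with j' | ⟨k, j'⟩
      · exact ⟨j', rfl⟩
      · exfalso
        rw [hq] at this
        have hk := ht0 k
        split_ifs at this <;> simp [blockVal] at this <;> exact hk (by simp [this])
    have hk : ∀ k (j : Fin (mm k)), ε (e.symm (Sum.inr ⟨k, j⟩)) = false ∧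
        ∃ j', e (σ (e.symm (Sum.inr ⟨k, j⟩))) = Sum.inr ⟨k, j'⟩ := by
      intro k j
      have := h2 (Sum.inr ⟨k, j⟩)
      rcases hq : e (σ (e.symm (Sum.inr ⟨k, j⟩))) with j' | ⟨k', j'⟩
      · exfalso
        rw [hq] at this
        have hk := ht0 k
        split_ifs at this <;> simp [blockVal] at this <;> exact hk this
      · rw [hq] at this
        by_cases hkk : k = k'
        · subst hkk
          refine ⟨?_, j', rfl⟩
          by_contra hne
          rw [Bool.not_eq_false] at hne
          rw [hne] at this
          exact hself k (by simpa [blockVal] using this)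
        · exfalso
          split_ifs at this
          · exact (ht k k' hkk).2 this
          · exact (ht k k' hkk).1 this
    choose a ha using hz
    choose hεk b hb using hk
    have ha_inj : Function.Injective a := by
      intro j j' hjj
      have : e (σ (e.symm (Sum.inl j))) = e (σ (e.symm (Sum.inl j'))) := by rw [ha, ha, hjj]
      simpa using this
    have hb_inj : ∀ k, Function.Injective (b k) := by
      intro k j j' hjj
      have : e (σ (e.symm (Sum.inr ⟨k, j⟩))) = e (σ (e.symm (Sum.inr ⟨k, j'⟩))) := by
        rw [hb, hb, hjj]
      simpa using this
    refine ⟨⟨Equiv.ofBijective a (Finite.injective_iff_bijective.mp ha_inj),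
      fun j => ε (e.symm (Sum.inl j)), ?_, fun j => ?_⟩, fun k =>
      ⟨Equiv.ofBijective (b k) (Finite.injective_iff_bijective.mp (hb_inj k)), fun j => ?_⟩⟩
    · rw [even_signs_iff] at hε ⊢
      rw [← Equiv.sum_comp e.symm, Fintype.sum_sum_type] at hε
      rw [Finset.sum_eq_zero (s := (Finset.univ : Finset (Σ k, Fin (mm k))))
        (fun p _ => by rw [hεk p.1 p.2]; rfl), add_zero] at hε
      exact hε
    · simp only [Equiv.ofBijective_apply]
      rw [h1, ← ha, e.symm_apply_apply]
    · simp only [Equiv.ofBijective_apply]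
      rw [h1, ← hb, e.symm_apply_apply, hεk]
      rfl
  · rintro ⟨⟨σ₀, ε₀, hε, h0⟩, hk⟩
    choose τ hτ using hk
    let S : Equiv.Perm (Fin m₀ ⊕ (Σ k, Fin (mm k))) :=
      Equiv.sumCongr σ₀ (Equiv.sigmaCongrRight τ)
    let E : Fin m₀ ⊕ (Σ k, Fin (mm k)) → Bool := Sum.elim ε₀ (fun _ => false)
    refine ⟨(e.trans S).trans e.symm, fun i => E (e i), ?_, fun i => ?_⟩
    · rw [even_signs_iff] at hε ⊢
      rw [Equiv.sum_comp e (fun p => (if E p = true then 1 else 0 : ZMod 2)),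
        Fintype.sum_sum_type]
      simp only [E, Sum.elim_inl, Sum.elim_inr, Bool.false_eq_true, if_false,
        Finset.sum_const_zero, add_zero]
      exact hε
    · obtain ⟨p, rfl⟩ := e.symm.surjective i
      rcases p with j | ⟨k, j⟩
      · have := h0 j
        cases hj : ε₀ j <;> simp [E, S, blockVal, hj] at this ⊢ <;> exact this
      · simpa [E, S, blockVal] using hτ k j

lemma prod_neg_involutive {X : Type*} [AddCommGroup X] :
    Function.Involutive (fun p : X × ℂ => (-p.1, -p.2)) := fun p => by simp

/-- Any class in the fibre over the orbit of `tb` is represented by a point lying over `tb`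
itself. -/
lemma exists_rep {X : Type*} [AddCommGroup X] {m : ℕ} (tb : Fin m → ℂ) (y : Fin m → X × ℂ)
    (h : signPermRelEven (fun s : ℂ => -s) m (fun i => (y i).2) tb) :
    ∃ x : Fin m → X, signPermRelEven (fun p : X × ℂ => (-p.1, -p.2)) m y
      (fun i => (x i, tb i)) := by
  obtain ⟨σ, ε, hε, h⟩ := h
  refine ⟨fun i => if ε i then -(y (σ i)).1 else (y (σ i)).1, σ, ε, hε, fun i => ?_⟩
  have hi := h i
  cases hb : ε i <;> simp only [hb] at hi ⊢ <;> exact Prod.ext rfl hi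

/-- The fibre over `t̄ = (0, …, 0, t_1, …, t_1, …, t_ℓ, …, t_ℓ)`. -/
lemma nonempty_fibre_equiv {X : Type*} [AddCommGroup X] {m : ℕ}
    (π : Quot (signPermRelEven (fun p : X × ℂ => (-p.1, -p.2)) m) →
         Quot (signPermRelEven (fun s : ℂ => -s) m))
    (hπ : ∀ x : Fin m → X × ℂ, π (Quot.mk _ x) = Quot.mk _ (fun i => (x i).2))
    {ℓ m₀ : ℕ} (mm : Fin ℓ → ℕ) (t : Fin ℓ → ℂ)
    (ht0 : ∀ i, t i ≠ 0) (ht : ∀ i j, i ≠ j → t i ≠ t j ∧ t i ≠ -t j) (tb : Fin m → ℂ)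
    (htb : Multiset.map tb Finset.univ.val =
      Multiset.replicate m₀ 0 + ∑ i, Multiset.replicate (mm i) (t i)) :
    Nonempty ({z : Quot (signPermRelEven (fun p : X × ℂ => (-p.1, -p.2)) m) //
        π z = Quot.mk _ tb} ≃
      (Quot (signPermRelEven (fun x : X => -x) m₀) × ∀ i, Sym X (mm i))) := by
  have hval : Multiset.map (blockVal (m₀ := m₀) mm t) Finset.univ.val =
      Multiset.replicate m₀ 0 + ∑ i, Multiset.replicate (mm i) (t i) := by
    rw [← Multiset.sum_map_singleton (Multiset.map _ _), Multiset.map_map]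
    change ∑ p, ({blockVal mm t p} : Multiset ℂ) = _
    rw [Fintype.sum_sum_type, Fintype.sum_sigma]
    simp [blockVal, Multiset.nsmul_singleton]
  obtain ⟨e, he⟩ := exists_equiv_of_map_univ_eq tb (blockVal (m₀ := m₀) mm t) (htb.trans hval.symm)
  obtain rfl : tb = fun i => blockVal mm t (e i) := funext he
  let Φ : (Fin m → X) → {z : Quot (signPermRelEven (fun p : X × ℂ => (-p.1, -p.2)) m) //
      π z = Quot.mk _ (fun i => blockVal mm t (e i))} :=
    fun x => ⟨Quot.mk _ (fun i => (x i, blockVal mm t (e i))), hπ _⟩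
  let Ψ : (Fin m → X) → Quot (signPermRelEven (fun x : X => -x) m₀) × ∀ i, Sym X (mm i) :=
    fun x => (Quot.mk _ (fun j => x (e.symm (Sum.inl j))),
      fun k => symOfFn (fun j => x (e.symm (Sum.inr ⟨k, j⟩))))
  have hΦ : Function.Surjective Φ := by
    rintro ⟨z, hz⟩
    induction z using Quot.inductionOn with
    | h y =>
      obtain ⟨x, hx⟩ := exists_rep _ y
        ((quot_mk_eq_iff neg_involutive _ _).mp ((hπ y).symm.trans hz))
      exact ⟨x, Subtype.ext (Quot.sound hx).symm⟩
  have hΨ : Function.Surjective Ψ := by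
    rintro ⟨q, s⟩
    induction q using Quot.inductionOn with
    | h y =>
      choose f hf using fun k => symOfFn_surjective (s k)
      refine ⟨fun i => Sum.elim y (fun p => f p.1 p.2) (e i), ?_⟩
      simp [Ψ, hf]
  have hker : Setoid.ker Φ = Setoid.ker Ψ := by
    ext x x'
    change Φ x = Φ x' ↔ Ψ x = Ψ x'
    rw [Subtype.ext_iff, Prod.ext_iff, funext_iff]
    change Quot.mk _ _ = Quot.mk _ _ ↔ Quot.mk _ _ = Quot.mk _ _ ∧ ∀ k, symOfFn _ = symOfFn _
    rw [quot_mk_eq_iff prod_neg_involutive, quot_mk_eq_iff neg_involutive,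
      block_rel_iff mm t ht0 ht]
    simp only [symOfFn_eq_iff]
  exact ⟨(Setoid.quotientKerEquivOfSurjective Φ hΦ).symm.trans
    ((Quotient.congrRight fun x x' => by rw [hker]).trans
      (Setoid.quotientKerEquivOfSurjective Ψ hΨ))⟩

/-- When there is no zero block, the factor `X^0/Δ_0` is a point. -/
lemma nonempty_fibre_equiv_of_ne_zero {X : Type*} [AddCommGroup X] {m : ℕ}
    (π : Quot (signPermRelEven (fun p : X × ℂ => (-p.1, -p.2)) m) →
         Quot (signPermRelEven (fun s : ℂ => -s) m))
    (hπ : ∀ x : Fin m → X × ℂ, π (Quot.mk _ x) = Quot.mk _ (fun i => (x i).2))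
    {ℓ : ℕ} (mm : Fin ℓ → ℕ) (t : Fin ℓ → ℂ)
    (ht0 : ∀ i, t i ≠ 0) (ht : ∀ i j, i ≠ j → t i ≠ t j ∧ t i ≠ -t j) (tb : Fin m → ℂ)
    (htb : Multiset.map tb Finset.univ.val = ∑ i, Multiset.replicate (mm i) (t i)) :
    Nonempty ({z : Quot (signPermRelEven (fun p : X × ℂ => (-p.1, -p.2)) m) //
        π z = Quot.mk _ tb} ≃ ∀ i, Sym X (mm i)) := by
  obtain ⟨E⟩ := nonempty_fibre_equiv (m₀ := 0) π hπ mm t ht0 ht tb (by simpa using htb)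
  have : Unique (Quot (signPermRelEven (fun x : X => -x) 0)) :=
    { default := Quot.mk _ Fin.elim0
      uniq := fun q => by
        induction q using Quot.inductionOn with
        | h y => exact congrArg _ (Subsingleton.elim _ _) }
  exact ⟨E.trans (Equiv.uniqueProd _ _)⟩

/-- The change of sign of the single coordinate `i₀`, an element of `Γ_m` outside `Δ_m`. -/
def flipAt {Y : Type*} (neg : Y → Y) {m : ℕ} (i₀ : Fin m) (x : Fin m → Y) : Fin m → Y :=
  fun i => if i = i₀ then neg (x i) else x i

lemma flipAt_involutive {Y : Type*} {neg : Y → Y} (hneg : Function.Involutive neg) {m : ℕ}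
    (i₀ : Fin m) : Function.Involutive (flipAt neg i₀) := by
  intro x
  funext i
  by_cases h : i = i₀ <;> simp [flipAt, h, hneg _]

/-- The single sign change normalises `Δ_m`: conjugating `(σ, ε)` by it changes `ε` at the two
places `i₀` and `σ⁻¹ i₀`, which preserves parity. -/
lemma flipAt_rel {Y : Type*} {neg : Y → Y} (hneg : Function.Involutive neg) {m : ℕ}
    (i₀ : Fin m) {x y : Fin m → Y} (h : signPermRelEven neg m x y) :
    signPermRelEven neg m (flipAt neg i₀ x) (flipAt neg i₀ y) := by
  obtain ⟨σ, ε, hε, h⟩ := h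
  refine ⟨σ, fun i => ε i ^^ (decide (i = i₀) ^^ decide (σ i = i₀)), ?_, fun i => ?_⟩
  · rw [even_signs_iff] at hε ⊢
    simp only [xor_indicator, Finset.sum_add_distrib]
    rw [hε, Equiv.sum_comp σ (fun i => (if decide (i = i₀) = true then 1 else 0 : ZMod 2)),
      zero_add, CharTwo.add_self_eq_zero]
  · simp only [flipAt, h i]
    by_cases h1 : i = i₀ <;> by_cases h2 : σ i = i₀ <;> by_cases hb : ε i = true <;>
      simp_all [hneg _]

/-- The bijection of `Y^m/Δ_m` induced by a single sign change. -/
def flipQuot {Y : Type*} {neg : Y → Y} (hneg : Function.Involutive neg) {m : ℕ} (i₀ : Fin m) :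
    Quot (signPermRelEven neg m) ≃ Quot (signPermRelEven neg m) :=
  Function.Involutive.toPerm (Quot.map (flipAt neg i₀) fun _ _ => flipAt_rel hneg i₀) fun q => by
    induction q using Quot.inductionOn with
    | h y => exact congrArg (Quot.mk _) (flipAt_involutive hneg i₀ y)

/-- A single sign change identifies the fibre over the orbit of `tb` with the fibre over the orbit
of the sign-changed `tb`. -/
lemma nonempty_fibre_flip {X : Type*} [AddCommGroup X] {m : ℕ}
    (π : Quot (signPermRelEven (fun p : X × ℂ => (-p.1, -p.2)) m) →
         Quot (signPermRelEven (fun s : ℂ => -s) m))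
    (hπ : ∀ x : Fin m → X × ℂ, π (Quot.mk _ x) = Quot.mk _ (fun i => (x i).2))
    (tb : Fin m → ℂ) (i₀ : Fin m) :
    Nonempty ({z : Quot (signPermRelEven (fun p : X × ℂ => (-p.1, -p.2)) m) //
        π z = Quot.mk _ tb} ≃
      {z : Quot (signPermRelEven (fun p : X × ℂ => (-p.1, -p.2)) m) //
        π z = Quot.mk _ (flipAt (fun s : ℂ => -s) i₀ tb)}) := by
  have hcomm : ∀ z, π (flipQuot prod_neg_involutive i₀ z) =
      flipQuot (neg := fun s : ℂ => -s) neg_involutive i₀ (π z) := by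
    intro z
    induction z using Quot.inductionOn with
    | h y =>
      rw [hπ]
      refine (hπ _).trans (congrArg (Quot.mk _) (funext fun i => ?_))
      by_cases h : i = i₀ <;> simp [flipAt, h]
  refine ⟨(flipQuot prod_neg_involutive i₀).subtypeEquiv fun z => ?_⟩
  rw [hcomm]
  exact (flipQuot (neg := fun s : ℂ => -s) neg_involutive i₀).injective.eq_iff.symm

/-- Let `X` be an additive abelian group and `m` a positive integer; let
`Δ_m ⊂ Γ_m = (ℤ₂)^m ⋊ S_m` (even number of sign changes) act on `(X × ℂ)^m` (via
`(x,t) ↦ (-x,-t)` coordinatewise) and on `ℂ^m` (via `t ↦ -t`), with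
`π̄_m : ((X × ℂ)^m)/Δ_m → (ℂ^m)/Δ_m` the induced map.
(a) If `t_i ≠ 0` and `t_i ≠ ±t_j` for `i ≠ j`, the fibre of `π̄_m` over the `Δ_m`-orbit of
`(t₁, …, t_m)` is in bijection with `X^m`.
(b) If `t̄ = (-t₁, t₁, …, t₁, t₂, …, t₂, …, t_ℓ, …, t_ℓ)` with multiplicities `m₁, …, m_ℓ`
(all even, summing to `m`), `t_i ≠ 0`, `t_i ≠ ±t_j` for `i ≠ j`, the fibre over its
`Δ_m`-orbit is in bijection with `Sym^{m₁} X × ⋯ × Sym^{m_ℓ} X`.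
(c) If `t̄` has `m₀` zero entries and each `t_i ≠ 0` repeated `m_i` times (`t_i ≠ ±t_j` for
`i ≠ j`), the fibre over its `Δ_m`-orbit is in bijection with
`(X^{m₀}/Δ_{m₀}) × Sym^{m₁} X × ⋯ × Sym^{m_ℓ} X`. -/
theorem hitchin_fibres_even_sign_perm_quotient
    {X : Type*} [AddCommGroup X] (m : ℕ) (hm : 0 < m)
    (π : Quot (signPermRelEven (fun p : X × ℂ => (-p.1, -p.2)) m) →
         Quot (signPermRelEven (fun s : ℂ => -s) m))
    (hπ : ∀ x : Fin m → X × ℂ,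
      π (Quot.mk _ x) = Quot.mk _ (fun i => (x i).2)) :
    (∀ t : Fin m → ℂ, (∀ i, t i ≠ 0) →
      (∀ i j, i ≠ j → t i ≠ t j ∧ t i ≠ -t j) →
      Nonempty ({z : Quot (signPermRelEven (fun p : X × ℂ => (-p.1, -p.2)) m) //
          π z = Quot.mk _ t} ≃ (Fin m → X))) ∧
    (∀ (ℓ : ℕ) (mm : Fin (ℓ + 1) → ℕ) (t : Fin (ℓ + 1) → ℂ),
      (∀ i, t i ≠ 0) → (∀ i j, i ≠ j → t i ≠ t j ∧ t i ≠ -t j) →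
      (∀ i, 0 < mm i) → (∀ i, Even (mm i)) → (∑ i, mm i) = m →
      ∀ tb : Fin m → ℂ,
        Multiset.map tb Finset.univ.val =
          (-t 0) ::ₘ (Multiset.replicate (mm 0 - 1) (t 0) +
            ∑ i : Fin ℓ, Multiset.replicate (mm i.succ) (t i.succ)) →
        Nonempty ({z : Quot (signPermRelEven (fun p : X × ℂ => (-p.1, -p.2)) m) //
            π z = Quot.mk _ tb} ≃ (∀ i, Sym X (mm i)))) ∧
    (∀ (ℓ m₀ : ℕ) (mm : Fin ℓ → ℕ) (t : Fin ℓ → ℂ),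
      (∀ i, t i ≠ 0) → (∀ i j, i ≠ j → t i ≠ t j ∧ t i ≠ -t j) →
      (∀ i, 0 < mm i) → m₀ + ∑ i, mm i = m →
      ∀ tb : Fin m → ℂ,
        Multiset.map tb Finset.univ.val =
          Multiset.replicate m₀ 0 + ∑ i, Multiset.replicate (mm i) (t i) →
        Nonempty ({z : Quot (signPermRelEven (fun p : X × ℂ => (-p.1, -p.2)) m) //
            π z = Quot.mk _ tb} ≃
          (Quot (signPermRelEven (fun x : X => -x) m₀) × ∀ i, Sym X (mm i)))) := by
  refine ⟨fun t ht0 ht => ?_, fun ℓ mm t ht0 ht hmm _ _ tb htb => ?_,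
    fun ℓ m₀ mm t ht0 ht _ _ tb htb => nonempty_fibre_equiv π hπ mm t ht0 ht tb htb⟩
  · obtain ⟨E⟩ := nonempty_fibre_equiv_of_ne_zero π hπ (fun _ => 1) t ht0 ht t (by
      simp only [Multiset.replicate_one]
      rw [← Multiset.sum_map_singleton (Multiset.map t _), Multiset.map_map]
      rfl)
    exact ⟨E.trans (Equiv.piCongrRight fun _ => Sym.oneEquiv.symm)⟩
  · obtain ⟨i₀, -, hi₀⟩ : ∃ i ∈ (Finset.univ : Finset (Fin m)).val, tb i = -t 0 := by
      rw [← Multiset.mem_map, htb]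
      exact Multiset.mem_cons_self _ _
    obtain ⟨F⟩ := nonempty_fibre_flip π hπ tb i₀
    -- Changing the sign at `i₀` turns the entry `-t 0` into `t 0` and leaves the others alone.
    have hflip : Multiset.map (flipAt (fun s : ℂ => -s) i₀ tb) Finset.univ.val =
        ∑ i, Multiset.replicate (mm i) (t i) := by
      have hu : (Finset.univ : Finset (Fin m)).val = i₀ ::ₘ (Finset.univ.erase i₀).val := by
        rw [← Finset.insert_val_of_notMem (Finset.notMem_erase i₀ _),
          Finset.insert_erase (Finset.mem_univ i₀)]
      have hrest : Multiset.map (flipAt (fun s : ℂ => -s) i₀ tb) (Finset.univ.erase i₀).val =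
          Multiset.map tb (Finset.univ.erase i₀).val :=
        Multiset.map_congr rfl fun i hi => if_neg (Finset.ne_of_mem_erase (Finset.mem_val.mp hi))
      rw [hu, Multiset.map_cons, hi₀] at htb
      rw [hu, Multiset.map_cons, hrest, (Multiset.cons_inj_right _).mp htb, Fin.sum_univ_succ,
        ← Multiset.cons_add, flipAt, if_pos rfl, hi₀, neg_neg, ← Multiset.replicate_succ,
        Nat.sub_add_cancel (hmm 0)]
    obtain ⟨E⟩ := nonempty_fibre_equiv_of_ne_zero π hπ mm t ht0 ht _ hflip
    exact ⟨F.trans E⟩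
end

section
/- Let X be a divisible additive abelian group and h a positive integer. Consider A_h = {(x_1, …, x_h) ∈ X^h : x_1 + ⋯ + x_h = 0} and the diagonal translation action of the h-torsion subgroup X[h] on A_h given by a·(x_1, …, x_h) = (x_1 + a, …, x_h + a) (which preserves A_h since h·a = 0). Then the quotient A_h / X[h] is isomorphic, as an abelian group, to X^{h−1}. -/
/-!
Taking differences with the first coordinate, `x ↦ (x₂ - x₁, …, x_h - x₁)`, is a homomorphism
`A_h → X^{h-1}`. Its kernel consists of the constant tuples `(a, …, a)` in `A_h`, and the sum
condition then says `h • a = 0`, so the kernel is exactly the diagonal copy of `X[h]`. It is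
surjective because `X` is `h`-divisible: a preimage of `y` is `(a, y₂ + a, …, y_h + a)` for any
`a` with `h • a = -∑ y`. The first isomorphism theorem finishes the proof.
-/

/-- Let `X` be a divisible additive abelian group and `h` a positive integer.
Let `A_h = {(x₁, …, x_h) ∈ X^h : x₁ + ⋯ + x_h = 0}` and let the `h`-torsion subgroup `X[h]`
act on `A_h` by diagonal translation `a • (x₁, …, x_h) = (x₁ + a, …, x_h + a)` (which
preserves `A_h` since `h • a = 0`).  Then `A_h / X[h]` is isomorphic, as an abelian group,
to `X^{h-1}`. -/
theorem sum_zero_quotient_diagonal_torsion_iso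
    {X : Type*} [AddCommGroup X]
    (hdiv : ∀ n : ℕ, 0 < n → Function.Surjective (fun x : X => n • x))
    (h : ℕ) (hh : 0 < h)
    (A : AddSubgroup (Fin h → X)) (hA : ∀ x : Fin h → X, x ∈ A ↔ ∑ i, x i = 0)
    (D : AddSubgroup A)
    (hD : ∀ y : A, y ∈ D ↔ ∃ a : X, h • a = 0 ∧ ∀ i, (y : Fin h → X) i = a) :
    Nonempty ((A ⧸ D) ≃+ (Fin (h - 1) → X)) := by
  obtain ⟨m, rfl⟩ : ∃ m, h = m + 1 := ⟨h - 1, by omega⟩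
  rw [Nat.add_sub_cancel]
  let f : A →+ (Fin m → X) :=
    { toFun := fun x i => (x : Fin (m + 1) → X) i.succ - (x : Fin (m + 1) → X) 0
      map_zero' := by ext i; simp
      map_add' := fun x y => by
        ext i
        simp only [AddSubgroup.coe_add, Pi.add_apply]
        abel }
  have hf : ∀ (x : A) (i : Fin m),
      f x i = (x : Fin (m + 1) → X) i.succ - (x : Fin (m + 1) → X) 0 := fun _ _ => rfl
  have hker : D = f.ker := by
    ext x
    rw [hD, AddMonoidHom.mem_ker]
    constructor
    · rintro ⟨a, -, hx⟩
      ext i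
      rw [hf, hx, hx, sub_self, Pi.zero_apply]
    · intro hx
      have hconst : ∀ i, (x : Fin (m + 1) → X) i = (x : Fin (m + 1) → X) 0 := by
        refine Fin.cases rfl fun i => ?_
        rw [← sub_eq_zero, ← hf, hx, Pi.zero_apply]
      refine ⟨(x : Fin (m + 1) → X) 0, ?_, hconst⟩
      have hsum := (hA x).1 x.2
      rwa [Finset.sum_congr rfl fun i _ => hconst i, Finset.sum_const, Finset.card_univ,
        Fintype.card_fin] at hsum
  have hsurj : Function.Surjective f := by
    intro y
    obtain ⟨a, ha⟩ := hdiv (m + 1) hh (-∑ i, y i)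
    have ha' : (m + 1) • a = -∑ i, y i := ha
    refine ⟨⟨Fin.cons a fun i => y i + a, (hA _).2 ?_⟩, ?_⟩
    · rw [Fin.sum_univ_succ]
      simp only [Fin.cons_zero, Fin.cons_succ, Finset.sum_add_distrib, Finset.sum_const,
        Finset.card_univ, Fintype.card_fin]
      rw [add_left_comm, ← succ_nsmul', ha', add_neg_cancel]
    · ext i
      simp [hf]
  exact ⟨(QuotientAddGroup.quotientAddEquivOfEq hker).trans
    (QuotientAddGroup.quotientKerEquivOfSurjective f hsurj)⟩
end
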